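/- Define, for N ≥ 2, E_N = B_N^{−1} · Σ_{k=0}^{N−1} v_{N,k} · Γ(2k + 3/2)/(2k)!, where B_N = binom(2N,N), C_k = binom(2k,k)/(k+1), and v_{N,k} = C_k · (4^{N−k−1} + ((N−k)/2) · B_{N−k}). Then the limit as N → ∞ of E_N / (N · log N) equals 1/√(2π). -/

import Mathlib

/-- `v N k = C_k (4^(N-k-1) + ((N-k)/2) B_{N-k})`. -/
noncomputable def dyckEdgeCount (N k : ℕ) : ℝ :=
  (catalan k : ℝ) *
    (4 ^ (N - k - 1) + ((N : ℝ) - (k : ℝ)) / 2 * (Nat.choose (2 * (N - k)) (N - k) : ℝ))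

/-- Average cost of the Dyck matching in the exponential-spacings model at `p = 1/2`. -/
noncomputable def dyckCostEShalf (N : ℕ) : ℝ :=
  ((Nat.choose (2 * N) N : ℝ))⁻¹ *
    ∑ k ∈ Finset.range N,
      dyckEdgeCount N k * Real.Gamma (2 * (k : ℝ) + 3 / 2) / ((2 * k).factorial : ℝ)

open Filter Topology Finset

/-- normalized central binomial -/
noncomputable def dyB (n : ℕ) : ℝ := (Nat.centralBinom n : ℝ) / 4 ^ n

noncomputable def dyW (k : ℕ) : ℝ :=
  (catalan k : ℝ) / 4 ^ k * (Real.Gamma (2 * (k : ℝ) + 3 / 2) / ((2 * k).factorial : ℝ))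

noncomputable def dyU (m : ℕ) : ℝ := 1 / 4 + (m : ℝ) / 2 * dyB m

noncomputable def dyP (n : ℕ) : ℝ := ∏ j ∈ Finset.range (n + 1), ((1 / 2 : ℝ) + j)

lemma dyP_pos (n : ℕ) : 0 < dyP n := Finset.prod_pos fun j _ => by positivity

lemma dyB_pos (n : ℕ) : 0 < dyB n := by
  have := Nat.centralBinom_pos n
  unfold dyB; positivity

lemma dyB_succ (n : ℕ) : dyB (n + 1) * (n + 1) = dyB n * (n + 1 / 2) := by
  have h : ((n : ℝ) + 1) * (Nat.centralBinom (n + 1)) = 2 * (2 * n + 1) * Nat.centralBinom n := by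
    exact_mod_cast Nat.succ_mul_centralBinom_succ n
  unfold dyB
  rw [pow_succ]
  field_simp
  linear_combination 2 * h

lemma dyB_anti : Antitone dyB := by
  apply antitone_nat_of_succ_le
  intro n
  have h := dyB_succ n
  have h1 := dyB_pos n
  have : dyB (n + 1) * (n + 1) ≤ dyB n * (n + 1) := by rw [h]; gcongr; norm_num
  exact le_of_mul_le_mul_right this (by positivity)

lemma dyB_eq (n : ℕ) : dyB n * ((n + 1 / 2) * n.factorial) = dyP n := by
  induction n with
  | zero => simp [dyB, dyP]
  | succ n ih =>
    have hP : dyP (n + 1) = dyP n * (1 / 2 + ((n + 1 : ℕ) : ℝ)) := by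
      unfold dyP; rw [Finset.prod_range_succ]
    rw [hP, ← ih, Nat.factorial_succ]
    push_cast
    linear_combination (n + 1 + 1 / 2) * (n.factorial : ℝ) * dyB_succ n

lemma dyGamma_eq (n : ℕ) : Real.Gamma ((n : ℝ) + 3 / 2) = √Real.pi * dyP n := by
  induction n with
  | zero =>
    have : ((0 : ℕ) : ℝ) + 3 / 2 = 1 / 2 + 1 := by norm_num
    rw [this, Real.Gamma_add_one (by norm_num), Real.Gamma_one_half_eq]
    simp [dyP]; ring
  | succ n ih =>
    have hP : dyP (n + 1) = dyP n * (1 / 2 + ((n + 1 : ℕ) : ℝ)) := by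
      unfold dyP; rw [Finset.prod_range_succ]
    have : ((n + 1 : ℕ) : ℝ) + 3 / 2 = (n + 3 / 2) + 1 := by push_cast; ring
    rw [this, Real.Gamma_add_one (by positivity), ih, hP]
    push_cast; ring

noncomputable def dyQ (n : ℕ) : ℝ := √(n : ℝ) * n.factorial / dyP n

lemma dyQ_tendsto : Tendsto dyQ atTop (𝓝 √Real.pi) := by
  have h := Real.GammaSeq_tendsto_Gamma (1 / 2)
  rw [Real.Gamma_one_half_eq] at h
  refine h.congr fun n => ?_
  simp [Real.GammaSeq, dyQ, dyP, Real.sqrt_eq_rpow]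

lemma dyW_eq (k : ℕ) (hk : 0 < k) : ((k : ℝ) + 1) * dyW k =
    √2 * √Real.pi * (k / (k + 1 / 2)) * (dyQ k)⁻¹ * (dyQ (2 * k))⁻¹ := by
  have hc : ((k : ℝ) + 1) * catalan k = Nat.centralBinom k := by
    exact_mod_cast succ_mul_catalan_eq_centralBinom k
  have hg := dyGamma_eq (2 * k)
  have h1 := dyP_pos k
  have h2 := dyP_pos (2 * k)
  have hb : ((k : ℝ) + 1) * (catalan k / 4 ^ k) = dyB k := by
    unfold dyB; rw [← hc]; ring
  have hb2 := dyB_eq k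
  have hb3 : dyB k = dyP k / ((k + 1 / 2) * k.factorial) := by
    rw [← hb2]; field_simp
  push_cast at hg
  have hkr : (0 : ℝ) < k := by exact_mod_cast hk
  have hs : √((2 * k : ℕ) : ℝ) = √2 * √(k : ℝ) := by
    push_cast; rw [Real.sqrt_mul (by norm_num)]
  unfold dyW
  rw [← mul_assoc, hb, hb3, hg, dyQ, dyQ, hs]
  have hsk : 0 < √(k : ℝ) := Real.sqrt_pos.2 hkr
  have e : (k : ℝ) = √(k : ℝ) * √(k : ℝ) := (Real.mul_self_sqrt hkr.le).symm
  have : (k : ℝ) / (k + 1 / 2) = √(k : ℝ) * √(k : ℝ) / (k + 1 / 2) := by rw [← e]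
  rw [this]
  generalize √(k : ℝ) = s at *
  have : (0 : ℝ) < k + 1 / 2 := by positivity
  field_simp

lemma dyW_nonneg (k : ℕ) : 0 ≤ dyW k := by
  have : 0 < Real.Gamma (2 * (k : ℝ) + 3 / 2) := Real.Gamma_pos_of_pos (by positivity)
  unfold dyW; positivity

lemma dyHalf_tendsto : Tendsto (fun k : ℕ => (k : ℝ) / (k + 1 / 2)) atTop (𝓝 1) :=
  tendsto_natCast_div_add_atTop (1 / 2 : ℝ)

lemma dyW_tendsto : Tendsto (fun k : ℕ => ((k : ℝ) + 1) * dyW k) atTop (𝓝 (√2 / √Real.pi)) := by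
  have hp : √Real.pi ≠ 0 := by positivity
  have h2 : Tendsto (fun k : ℕ => dyQ (2 * k)) atTop (𝓝 √Real.pi) :=
    dyQ_tendsto.comp (tendsto_id.const_mul_atTop' (by norm_num : 0 < 2))
  have h := ((dyHalf_tendsto.const_mul (√2 * √Real.pi)).mul (dyQ_tendsto.inv₀ hp)).mul (h2.inv₀ hp)
  have e : √2 * √Real.pi * 1 * (√Real.pi)⁻¹ * (√Real.pi)⁻¹ = √2 / √Real.pi := by field_simp
  rw [e] at h
  refine h.congr' ?_
  filter_upwards [eventually_gt_atTop 0] with k hk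
  exact (dyW_eq k hk).symm

lemma dyH_tendsto : Tendsto (fun n : ℕ => (∑ i ∈ range n, (1 / ((i : ℝ) + 1))) / Real.log n)
    atTop (𝓝 1) := by
  have hl : Tendsto (fun n : ℕ => Real.log (n : ℝ)) atTop atTop :=
    Real.tendsto_log_atTop.comp tendsto_natCast_atTop_atTop
  have h := Real.tendsto_harmonic_sub_log.div_atTop hl
  have h' := h.add_const 1
  rw [zero_add] at h'
  refine h'.congr' ?_
  filter_upwards [hl.eventually_gt_atTop 0] with n hn
  have : ((harmonic n : ℚ) : ℝ) = ∑ i ∈ range n, (1 / ((i : ℝ) + 1)) := by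
    simp [harmonic]
  rw [this]
  field_simp
  ring

lemma dyWsum_tendsto : Tendsto (fun n : ℕ => (∑ i ∈ range n, dyW i) / Real.log n)
    atTop (𝓝 (√2 / √Real.pi)) := by
  set c := √2 / √Real.pi
  have ho : (fun k : ℕ => dyW k - c * (1 / ((k : ℝ) + 1))) =o[atTop]
      (fun k : ℕ => 1 / ((k : ℝ) + 1)) := by
    rw [Asymptotics.isLittleO_iff_tendsto (fun k hk => by
      exfalso; have : (0:ℝ) < 1 / ((k : ℝ) + 1) := by positivity
      linarith)]
    have h := dyW_tendsto.sub_const c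
    rw [sub_self] at h
    refine h.congr fun k => ?_
    have : (0:ℝ) < (k : ℝ) + 1 := by positivity
    field_simp
  have hs := ho.sum_range (fun k => by positivity) Real.tendsto_sum_range_one_div_nat_succ_atTop
  have ht := hs.tendsto_div_nhds_zero
  have h := (ht.add_const c).mul dyH_tendsto
  rw [zero_add, mul_one] at h
  refine h.congr' ?_
  filter_upwards [eventually_gt_atTop 0] with n hn
  have hpos : 0 < ∑ i ∈ range n, (1 / ((i : ℝ) + 1)) :=
    Finset.sum_pos (fun i _ => by positivity) ⟨0, by simpa using hn⟩
  rw [Finset.sum_sub_distrib, ← Finset.mul_sum]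
  generalize ∑ i ∈ range n, (1 / ((i : ℝ) + 1)) = S at *
  field_simp
  ring

lemma dyInv_tendsto : Tendsto (fun n : ℕ => (dyU n / dyB n) / n) atTop (𝓝 (1 / 2)) := by
  have hs : Tendsto (fun n : ℕ => √(n : ℝ)) atTop atTop :=
    Real.tendsto_sqrt_atTop.comp tendsto_natCast_atTop_atTop
  have h1 := (dyQ_tendsto.div_atTop hs).mul (dyHalf_tendsto.inv₀ one_ne_zero)
  have h2 := (h1.const_mul (1 / 4)).add_const (1 / 2)
  simp only [zero_mul, mul_zero, zero_add] at h2
  refine h2.congr' ?_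
  filter_upwards [eventually_gt_atTop 0] with n hn
  have hnr : (0 : ℝ) < n := by exact_mod_cast hn
  have hsn : 0 < √(n : ℝ) := Real.sqrt_pos.2 hnr
  have hb := dyB_pos n
  have : (0 : ℝ) < n + 1 / 2 := by positivity
  unfold dyU dyQ
  rw [← dyB_eq n]
  field_simp
  try ring

lemma dyU_le {m n : ℕ} (h : m ≤ n) : dyU m ≤ dyU n := by
  have : Monotone dyU := by
    apply monotone_nat_of_le_succ
    intro n
    have := dyB_succ n
    have := dyB_pos n
    unfold dyU
    push_cast
    linarith
  exact this h

lemma dyU_ge {k n : ℕ} (hn : 0 < n) (h : k ≤ n) : dyU n * (1 - k / n) ≤ dyU (n - k) := by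
  have hnr : (0 : ℝ) < n := by exact_mod_cast hn
  have hk : (k : ℝ) ≤ n := by exact_mod_cast h
  have hb := dyB_anti (Nat.sub_le n k)
  unfold dyU
  rw [Nat.cast_sub h]
  have e : (1 / 4 + (n : ℝ) / 2 * dyB n) * (1 - k / n) =
    1 / 4 * (1 - k / n) + (n - k) / 2 * dyB n := by field_simp
  rw [e]
  have : (0:ℝ) ≤ k / n := by positivity
  have : ((n:ℝ) - k) / 2 * dyB n ≤ (n - k) / 2 * dyB (n - k) :=
    mul_le_mul_of_nonneg_left hb (by linarith)
  linarith

lemma dyCost_eq (N : ℕ) : dyckCostEShalf N = (dyB N)⁻¹ * ∑ k ∈ range N, dyW k * dyU (N - k) := by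
  unfold dyckCostEShalf
  have hb : (Nat.choose (2 * N) N : ℝ) = dyB N * 4 ^ N := by
    unfold dyB Nat.centralBinom; field_simp
  rw [hb, mul_inv, mul_assoc, Finset.mul_sum]
  congr 1
  refine Finset.sum_congr rfl fun k hk => ?_
  have hk : k < N := Finset.mem_range.1 hk
  obtain ⟨m, rfl⟩ : ∃ m, N = k + (m + 1) := ⟨N - k - 1, by omega⟩
  have e1 : k + (m + 1) - k = m + 1 := by omega
  have e2 : m + 1 - 1 = m := by omega
  have hb2 : (Nat.choose (2 * (m + 1)) (m + 1) : ℝ) = dyB (m + 1) * 4 ^ (m + 1) := by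
    unfold dyB Nat.centralBinom; field_simp
  unfold dyckEdgeCount dyW dyU
  rw [e1, e2, hb2, pow_add, pow_succ]
  push_cast
  field_simp
  ring

theorem dyckCostES_leading_half :
    Filter.Tendsto
      (fun N : ℕ => dyckCostEShalf N / ((N : ℝ) * Real.log N))
      Filter.atTop
      (nhds (1 / Real.sqrt (2 * Real.pi))) := by
  have hl : Tendsto (fun n : ℕ => Real.log (n : ℝ)) atTop atTop :=
    Real.tendsto_log_atTop.comp tendsto_natCast_atTop_atTop
  have hlim : (1 / √(2 * Real.pi)) = 1 / 2 * (√2 / √Real.pi) := by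
    rw [Real.sqrt_mul (by norm_num)]
    have : √2 * √2 = 2 := Real.mul_self_sqrt (by norm_num)
    have h2 : (0:ℝ) < √2 := by positivity
    have hp : (0:ℝ) < √Real.pi := by positivity
    field_simp
    linarith
  have hup := dyInv_tendsto.mul dyWsum_tendsto
  have hces := (dyW_tendsto.cesaro).div_atTop hl
  have hlow := dyInv_tendsto.mul (dyWsum_tendsto.sub hces)
  rw [sub_zero] at hlow
  rw [hlim]
  refine tendsto_of_tendsto_of_tendsto_of_le_of_le' hlow hup ?_ ?_
  · filter_upwards [eventually_gt_atTop 0, hl.eventually_gt_atTop 0] with N hN hlog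
    have hnr : (0 : ℝ) < N := by exact_mod_cast hN
    have hb := dyB_pos N
    have hU : 0 < dyU N := by unfold dyU; positivity
    rw [dyCost_eq]
    have key : dyU N * (∑ i ∈ range N, dyW i - (N : ℝ)⁻¹ * ∑ i ∈ range N, ((i : ℝ) + 1) * dyW i)
        ≤ ∑ k ∈ range N, dyW k * dyU (N - k) := by
      rw [Finset.mul_sum, ← Finset.sum_sub_distrib, Finset.mul_sum]
      refine Finset.sum_le_sum fun k hk => ?_
      have h1 := mul_le_mul_of_nonneg_left (dyU_ge hN (Finset.mem_range.1 hk).le) (dyW_nonneg k)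
      have hw := dyW_nonneg k
      have h2 : 0 ≤ dyU N * dyW k * (N : ℝ)⁻¹ := by positivity
      have h3 : dyU N * (dyW k - (N : ℝ)⁻¹ * (((k : ℝ) + 1) * dyW k)) =
          dyW k * (dyU N * (1 - k / N)) - dyU N * dyW k * (N : ℝ)⁻¹ := by
        ring
      linarith
    calc _ = (dyB N)⁻¹ * (dyU N * (∑ i ∈ range N, dyW i -
              (N : ℝ)⁻¹ * ∑ i ∈ range N, ((i : ℝ) + 1) * dyW i)) / (N * Real.log N) := by
            field_simp
      _ ≤ _ := by gcongr
  · filter_upwards [eventually_gt_atTop 0, hl.eventually_gt_atTop 0] with N hN hlog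
    have hnr : (0 : ℝ) < N := by exact_mod_cast hN
    have hb := dyB_pos N
    rw [dyCost_eq]
    have key : ∑ k ∈ range N, dyW k * dyU (N - k) ≤ dyU N * ∑ i ∈ range N, dyW i := by
      rw [Finset.mul_sum]
      refine Finset.sum_le_sum fun k hk => ?_
      rw [mul_comm]
      exact mul_le_mul_of_nonneg_right (dyU_le (Nat.sub_le _ _)) (dyW_nonneg k)
    calc _ ≤ (dyB N)⁻¹ * (dyU N * ∑ i ∈ range N, dyW i) / (N * Real.log N) := by gcongr
      _ = _ := by field_simp
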